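/- In the semiring StackOp_Σ, every monomial (finite ⊗-product of generators pop_x, push_x) is either equal to 0 or equal to a product of the form pop_{u₁} ⊗ ⋯ ⊗ pop_{u_n} ⊗ push_{v_m} ⊗ ⋯ ⊗ push_{v₁} for some n, m ≥ 0 and u₁, …, u_n, v₁, …, v_m ∈ Σ; in particular every reduced monomial has this pops-then-pushes form. -/

import Mathlib

/-!
Left multiplication by a generator sends a pops-then-pushes product to another one or to `0`. Only
`push x * (pop y * ⋯)` is not already of that form, and there the defining relations either cancel
the two generators or annihilate the product. So a monomial can be read from right to left, with
`1`, the empty product, as the starting point.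
-/

section PopPush

variable {S M : Type*}

/-- The elements `pop u₁ * ⋯ * pop uₙ * push vₘ * ⋯ * push v₁`, the normal form of a nonzero
monomial in `pop` and `push`. The subscripts of the `v`s follow the stack convention
`push_v = push vₘ * ⋯ * push v₁`; the list `vs` is in the order of multiplication, with `vₘ`
first. -/
def IsPopsThenPushes [Monoid M] (pop push : S → M) (a : M) : Prop :=
  ∃ us vs : List S, a = (us.map pop).prod * (vs.map push).prod

namespace IsPopsThenPushes

theorem one [Monoid M] (pop push : S → M) : IsPopsThenPushes pop push 1 :=
  ⟨[], [], by simp⟩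

theorem pop_mul [Monoid M] {pop push : S → M} {a : M} (ha : IsPopsThenPushes pop push a) (x : S) :
    IsPopsThenPushes pop push (pop x * a) := by
  obtain ⟨us, vs, rfl⟩ := ha
  exact ⟨x :: us, vs, by simp [mul_assoc]⟩

theorem push_mul_eq_zero_or [MonoidWithZero M] {pop push : S → M} {a : M}
    (hunit : ∀ x, push x * pop x = 1) (hzero : ∀ x y, x ≠ y → push x * pop y = 0)
    (ha : IsPopsThenPushes pop push a) (x : S) :
    push x * a = 0 ∨ IsPopsThenPushes pop push (push x * a) := by
  obtain ⟨us, vs, rfl⟩ := ha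
  rcases us with _ | ⟨y, us⟩
  · exact Or.inr ⟨[], x :: vs, by simp⟩
  have push_mul_pop_mul : push x * (((y :: us).map pop).prod * (vs.map push).prod) =
      push x * pop y * ((us.map pop).prod * (vs.map push).prod) := by
    simp [mul_assoc]
  rw [push_mul_pop_mul]
  obtain rfl | hxy := eq_or_ne x y
  · exact Or.inr ⟨us, vs, by rw [hunit, one_mul]⟩
  · exact Or.inl (by rw [hzero x y hxy, zero_mul])

end IsPopsThenPushes

theorem stackOp_monomial_eq_zero_or_pops_then_pushes_general [MonoidWithZero M] {pop push : S → M}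
    (hunit : ∀ x, push x * pop x = 1) (hzero : ∀ x y, x ≠ y → push x * pop y = 0)
    (w : List (S ⊕ S)) :
    (w.map (Sum.elim pop push)).prod = 0 ∨
      IsPopsThenPushes pop push (w.map (Sum.elim pop push)).prod := by
  induction w with
  | nil => exact Or.inr (.one pop push)
  | cons g w ih =>
    rw [List.map_cons, List.prod_cons]
    rcases ih with h_zero | h_normal
    · exact Or.inl (by rw [h_zero, mul_zero])
    rcases g with x | x
    · exact Or.inr (h_normal.pop_mul x)
    · exact h_normal.push_mul_eq_zero_or hunit hzero x

end PopPush

/-- in the idempotent semiring `StackOp_Σ` — equivalently, in any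
idempotent semiring equipped with elements `pop x`, `push x` (`x ∈ Σ`)
satisfying the defining relations `push x ⊗ pop x = 1` and
`push x ⊗ pop y = 0` for `x ≠ y` — every monomial (finite ⊗-product of the
generators, with `Sum.inl x` interpreted as `pop x` and `Sum.inr x` as
`push x`) is either equal to `0` or equal to a product of the form
`pop u₁ ⊗ ⋯ ⊗ pop uₙ ⊗ push vₘ ⊗ ⋯ ⊗ push v₁`; in particular every reduced
monomial has this pops-then-pushes form. -/
theorem stackOp_monomial_eq_zero_or_pops_then_pushes
    {S : Type} (R : Type) [Semiring R] (hidem : ∀ a : R, a + a = a)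
    (pop push : S → R)
    (hunit : ∀ x : S, push x * pop x = 1)
    (hzero : ∀ x y : S, x ≠ y → push x * pop y = 0)
    (w : List (S ⊕ S)) :
    (w.map (Sum.elim pop push)).prod = 0 ∨
      ∃ us vs : List S,
        (w.map (Sum.elim pop push)).prod =
          (us.map pop).prod * (vs.map push).prod :=
  stackOp_monomial_eq_zero_or_pops_then_pushes_general hunit hzero w
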